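/- For every x ∈ ℝⁿ, t > 0 and ε > 0, the posterior mean squared error satisfies E_J[‖y − u_PM(x,t,ε)‖²] = tε ∇ₓ·u_PM(x,t,ε) = ntε − t²ε ΔₓS_ε(x,t), where ∇ₓ· denotes the divergence in x of the (differentiable) map x ↦ u_PM(x,t,ε) and Δₓ denotes the Laplacian in x of the (twice differentiable) map x ↦ S_ε(x,t). -/

import Mathlib

open scoped Topology
open Filter MeasureTheory

/-- The integrand `exp(−(‖x−y‖²/(2t) + J(y))/ε)`, with the convention `exp(−∞) = 0`. -/
noncomputable def heatIntegrand (n : ℕ) (J : EuclideanSpace ℝ (Fin n) → EReal)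
    (x : EuclideanSpace ℝ (Fin n)) (t ε : ℝ) (y : EuclideanSpace ℝ (Fin n)) : ℝ :=
  if J y = ⊤ then 0 else Real.exp (-((‖x - y‖ ^ 2 / (2 * t) + (J y).toReal) / ε))

/-- The partition function `Z_J(x,t,ε) = ∫ exp(−(‖x−y‖²/(2t) + J(y))/ε) dy`. -/
noncomputable def partitionFn (n : ℕ) (J : EuclideanSpace ℝ (Fin n) → EReal)
    (x : EuclideanSpace ℝ (Fin n)) (t ε : ℝ) : ℝ :=
  ∫ y, heatIntegrand n J x t ε y

/-- The posterior mean estimate `u_PM(x,t,ε) = E_J[y]`. -/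
noncomputable def postMean (n : ℕ) (J : EuclideanSpace ℝ (Fin n) → EReal)
    (x : EuclideanSpace ℝ (Fin n)) (t ε : ℝ) : EuclideanSpace ℝ (Fin n) :=
  (partitionFn n J x t ε)⁻¹ • ∫ y, heatIntegrand n J x t ε y • y

/-- `S_ε(x,t) = −ε ln((2πtε)^{−n/2} Z_J(x,t,ε))`. -/
noncomputable def viscSol (n : ℕ) (J : EuclideanSpace ℝ (Fin n) → EReal)
    (x : EuclideanSpace ℝ (Fin n)) (t ε : ℝ) : ℝ :=
  -ε * Real.log ((2 * Real.pi * t * ε) ^ (-(n : ℝ) / 2) * partitionFn n J x t ε)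

/-- The divergence `∇·u(x) = ∑ᵢ ∂uᵢ/∂xᵢ (x)` of a vector field `u : ℝⁿ → ℝⁿ`. -/
noncomputable def divergence (n : ℕ) (u : EuclideanSpace ℝ (Fin n) → EuclideanSpace ℝ (Fin n))
    (x : EuclideanSpace ℝ (Fin n)) : ℝ :=
  ∑ i : Fin n, (fderiv ℝ u x (EuclideanSpace.single i 1)) i

/-!
Expanding `‖x - y‖²` shows that the posterior for the datum `x` is, up to normalisation,
`exp ⟪v, y⟫ dμ(y)` with `v = x / (tε)`, where the finite measure `μ` does not depend on `x`. The
posteriors therefore form an exponential family. With `Λ v = log ∫ exp ⟪v, y⟫ dμ(y)`, the mean is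
`∇Λ v` and the derivative of the mean in `v` is the covariance operator. Its trace is the mean
squared error, while the trace of the derivative in `x` is the divergence; the chain rule
contributes the factor `1 / (tε)`. Finally `S_ε(x) = const + ‖x‖² / (2t) - ε Λ(x / (tε))`, so
`∇S_ε(x) = (x - u_PM(x)) / t`, which gives the Laplacian.
-/

section Gaussian

variable {V : Type*} [NormedAddCommGroup V] [InnerProductSpace ℝ V] [FiniteDimensional ℝ V]
  [MeasurableSpace V] [BorelSpace V]

theorem integrable_exp_neg_mul_norm_sq {b : ℝ} (hb : 0 < b) :
    Integrable fun y : V ↦ Real.exp (-b * ‖y‖ ^ 2) := by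
  have h := (GaussianFourier.integrable_cexp_neg_mul_sq_norm_add (V := V) (b := (b : ℂ))
    (by simpa using hb) 0 0).norm
  refine h.congr (.of_forall fun y ↦ ?_)
  simp [Complex.norm_exp, ← Complex.ofReal_pow]

theorem integrable_exp_mul_norm_sub_mul_norm_sq {b : ℝ} (hb : 0 < b) (a : ℝ) :
    Integrable fun y : V ↦ Real.exp (a * ‖y‖ - b * ‖y‖ ^ 2) := by
  refine ((integrable_exp_neg_mul_norm_sq (half_pos hb)).const_mul
    (Real.exp (a ^ 2 / (2 * b)))).mono' (by fun_prop) (.of_forall fun y ↦ ?_)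
  rw [Real.norm_of_nonneg (Real.exp_nonneg _), ← Real.exp_add, Real.exp_le_exp]
  have hsq : a ^ 2 / (2 * b) + -(b / 2) * ‖y‖ ^ 2 - (a * ‖y‖ - b * ‖y‖ ^ 2)
      = (a - b * ‖y‖) ^ 2 / (2 * b) := by
    field_simp
    ring
  have : 0 ≤ (a - b * ‖y‖) ^ 2 / (2 * b) := by positivity
  linarith

end Gaussian

section Covariance

variable {Ω V F : Type*} [MeasurableSpace Ω] {P : Measure Ω} [NormedAddCommGroup V]
  [InnerProductSpace ℝ V] [NormedAddCommGroup F] [NormedSpace ℝ F]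

theorem aestronglyMeasurable_rankOne {f : Ω → F} {g : Ω → V} (hf : AEStronglyMeasurable f P)
    (hg : AEStronglyMeasurable g P) :
    AEStronglyMeasurable (fun ω ↦ InnerProductSpace.rankOne ℝ (f ω) (g ω)) P :=
  (ContinuousLinearMap.smulRightL ℝ V F).aestronglyMeasurable_comp₂
    ((innerSL ℝ).continuous.comp_aestronglyMeasurable hg) hf

theorem integrable_rankOne {f : Ω → F} {g : Ω → V} (hf : MemLp f 2 P) (hg : MemLp g 2 P) :
    Integrable (fun ω ↦ InnerProductSpace.rankOne ℝ (f ω) (g ω)) P :=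
  (hf.norm.integrable_mul hg.norm).mono' (aestronglyMeasurable_rankOne hf.1 hg.1)
    (.of_forall fun ω ↦ (InnerProductSpace.norm_rankOne (f ω) (g ω)).le)

theorem trace_integral [FiniteDimensional ℝ V] {A : Ω → V →L[ℝ] V} (hA : Integrable A P) :
    (∫ ω, A ω ∂P).trace ℝ V = ∫ ω, (A ω).trace ℝ V ∂P :=
  ((LinearMap.trace ℝ V ∘ₗ ContinuousLinearMap.coeLM ℝ).toContinuousLinearMap.integral_comp_comm
    hA).symm

variable [MeasurableSpace V] {ν : Measure V}

/-- The covariance operator of `ν`, written as the average of the rank-one operators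
`w ↦ ⟪y - m, w⟫ • (y - m)` with `m` the mean of `ν`. In contrast,
`ProbabilityTheory.covarianceOperator` is uncentered. -/
noncomputable def centeredCovarianceOperator (ν : Measure V) : V →L[ℝ] V :=
  ∫ y, InnerProductSpace.rankOne ℝ (y - ∫ z, z ∂ν) (y - ∫ z, z ∂ν) ∂ν

theorem trace_centeredCovarianceOperator [FiniteDimensional ℝ V] [IsFiniteMeasure ν]
    (hν : MemLp id 2 ν) :
    (centeredCovarianceOperator ν).trace ℝ V = ∫ y, ‖y - ∫ z, z ∂ν‖ ^ 2 ∂ν := by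
  have hsub : MemLp (fun y ↦ y - ∫ z, z ∂ν) 2 ν := hν.sub (memLp_const _)
  simp_rw [centeredCovarianceOperator, trace_integral (integrable_rankOne hsub hsub),
    InnerProductSpace.trace_rankOne, real_inner_self_eq_norm_sq]

theorem centeredCovarianceOperator_eq_integral_rankOne_sub [CompleteSpace V]
    [IsProbabilityMeasure ν] (hν : MemLp id 2 ν) :
    centeredCovarianceOperator ν = ∫ y, InnerProductSpace.rankOne ℝ (y - ∫ z, z ∂ν) y ∂ν := by
  set m := ∫ z, z ∂ν
  have hid : MemLp (fun y ↦ y) 2 ν := hν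
  have hsub : MemLp (fun y ↦ y - m) 2 ν := hν.sub (memLp_const m)
  have hcentered : ∫ y, (y - m) ∂ν = 0 := by
    rw [integral_sub (hid.integrable one_le_two) (integrable_const m), integral_const,
      probReal_univ, one_smul, sub_self]
  have hcross : ∫ y, InnerProductSpace.rankOne ℝ (y - m) m ∂ν = 0 := by
    have h := ((InnerProductSpace.rankOne ℝ (E := V)).flip m).integral_comp_comm
      (hsub.integrable one_le_two)
    simpa only [ContinuousLinearMap.flip_apply, hcentered, map_zero] using h
  calc centeredCovarianceOperator ν
      = ∫ y, (InnerProductSpace.rankOne ℝ (y - m) y - InnerProductSpace.rankOne ℝ (y - m) m) ∂ν :=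
        integral_congr_ae (.of_forall fun y ↦ map_sub (InnerProductSpace.rankOne ℝ (y - m)) y m)
    _ = ∫ y, InnerProductSpace.rankOne ℝ (y - m) y ∂ν := by
        rw [integral_sub (integrable_rankOne hsub hid) (integrable_rankOne hsub (memLp_const m)),
          hcross, sub_zero]

end Covariance

section ExpNormMoments

variable {V F : Type*} [NormedAddCommGroup V] [NormedAddCommGroup F] {C a : ℝ}

-- The factors `1` give this the shape `C * exp (a * ‖y‖)` of the growth bounds below.
theorem norm_le_one_mul_exp_norm (y : V) : ‖y‖ ≤ 1 * Real.exp (1 * ‖y‖) := by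
  linarith [Real.add_one_le_exp (1 * ‖y‖)]

theorem norm_sub_le_mul_exp_norm (m y : V) :
    ‖y - m‖ ≤ (1 + ‖m‖) * Real.exp (1 * ‖y‖) := by
  have hy := Real.add_one_le_exp (1 * ‖y‖)
  nlinarith [norm_sub_le y m, norm_nonneg m, norm_nonneg y]

variable [MeasurableSpace V] {μ : Measure V}

/-- The measure `μ` has exponential moments of all orders: `∫ exp (a‖y‖) dμ(y) < ∞` for every
real `a`. This makes the Laplace transform of `μ` finite and smooth on the whole space. -/
def HasExpNormMoments (μ : Measure V) : Prop :=
  ∀ a : ℝ, Integrable (fun y ↦ Real.exp (a * ‖y‖)) μ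

namespace HasExpNormMoments

theorem integrable_of_norm_le (hμ : HasExpNormMoments μ) {g : V → F}
    (hg : AEStronglyMeasurable g μ) (hga : ∀ y, ‖g y‖ ≤ C * Real.exp (a * ‖y‖)) :
    Integrable g μ :=
  ((hμ a).const_mul C).mono' hg (.of_forall hga)

theorem memLp_two_id [BorelSpace V] [SecondCountableTopology V]
    (hμ : HasExpNormMoments μ) : MemLp id 2 μ := by
  refine (memLp_two_iff_integrable_sq_norm aestronglyMeasurable_id).2 ?_
  refine hμ.integrable_of_norm_le (C := 1) (a := 2) (by fun_prop) fun y ↦ ?_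
  calc ‖‖id y‖ ^ 2‖ = ‖y‖ ^ 2 := by simp
    _ ≤ (1 * Real.exp (1 * ‖y‖)) ^ 2 := by gcongr; exact norm_le_one_mul_exp_norm y
    _ = 1 * Real.exp (2 * ‖y‖) := by
        rw [one_mul, one_mul, one_mul, ← Real.exp_nat_mul, Nat.cast_ofNat]

end HasExpNormMoments

end ExpNormMoments

section ExponentialFamily

variable {V F : Type*} [NormedAddCommGroup V] [InnerProductSpace ℝ V] [NormedAddCommGroup F]
  [NormedSpace ℝ F] {C a : ℝ}

theorem norm_exp_inner_smul_le (v : V) {y : V} {z : F} (hz : ‖z‖ ≤ C * Real.exp (a * ‖y‖)) :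
    ‖Real.exp (inner ℝ v y) • z‖ ≤ C * Real.exp ((‖v‖ + a) * ‖y‖) := by
  rw [norm_smul, Real.norm_of_nonneg (Real.exp_nonneg _)]
  calc Real.exp (inner ℝ v y) * ‖z‖
      ≤ Real.exp (‖v‖ * ‖y‖) * (C * Real.exp (a * ‖y‖)) := by
        gcongr
        exact real_inner_le_norm v y
    _ = C * Real.exp ((‖v‖ + a) * ‖y‖) := by
        rw [add_mul, Real.exp_add]
        ring

theorem norm_rankOne_le_mul_exp_norm {y : V} {z : F} (hz : ‖z‖ ≤ C * Real.exp (a * ‖y‖)) :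
    ‖InnerProductSpace.rankOne ℝ z y‖ ≤ C * Real.exp ((a + 1) * ‖y‖) := by
  rw [InnerProductSpace.norm_rankOne]
  calc ‖z‖ * ‖y‖ ≤ C * Real.exp (a * ‖y‖) * (1 * Real.exp (1 * ‖y‖)) := by
        gcongr
        · exact (norm_nonneg z).trans hz
        · exact norm_le_one_mul_exp_norm y
    _ = C * Real.exp ((a + 1) * ‖y‖) := by
        rw [add_mul, Real.exp_add]
        ring

theorem hasFDerivAt_exp_inner_smul (y v : V) (z : F) :
    HasFDerivAt (fun w ↦ Real.exp (inner ℝ w y) • z)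
      (Real.exp (inner ℝ v y) • InnerProductSpace.rankOne ℝ z y) v := by
  have hinner : HasFDerivAt (fun w ↦ inner ℝ w y) (innerSL ℝ y) v := by
    simp_rw [real_inner_comm y]
    exact (innerSL ℝ y).hasFDerivAt
  refine (hinner.exp.smul_const z).congr_fderiv ?_
  ext w
  simp [smul_smul]

variable [MeasurableSpace V] {μ : Measure V}

theorem integral_tilted_inner (v : V) (g : V → F) :
    ∫ y, g y ∂(μ.tilted (inner ℝ v)) =
      (∫ y, Real.exp (inner ℝ v y) ∂μ)⁻¹ • ∫ y, Real.exp (inner ℝ v y) • g y ∂μ := by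
  simp_rw [integral_tilted, div_eq_inv_mul, mul_smul, integral_smul]

variable [BorelSpace V] [SecondCountableTopology V]

theorem aestronglyMeasurable_exp_inner_smul (v : V) {g : V → F} (hg : AEStronglyMeasurable g μ) :
    AEStronglyMeasurable (fun y ↦ Real.exp (inner ℝ v y) • g y) μ :=
  AEStronglyMeasurable.smul (by fun_prop) hg

namespace HasExpNormMoments

theorem integrable_exp_inner_smul (hμ : HasExpNormMoments μ) (v : V)
    {g : V → F} (hg : AEStronglyMeasurable g μ) (hga : ∀ y, ‖g y‖ ≤ C * Real.exp (a * ‖y‖)) :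
    Integrable (fun y ↦ Real.exp (inner ℝ v y) • g y) μ :=
  hμ.integrable_of_norm_le (aestronglyMeasurable_exp_inner_smul v hg)
    fun y ↦ norm_exp_inner_smul_le v (hga y)

theorem integrable_exp_inner (hμ : HasExpNormMoments μ) (v : V) :
    Integrable (fun y ↦ Real.exp (inner ℝ v y)) μ := by
  simpa using hμ.integrable_exp_inner_smul v (g := fun _ ↦ (1 : ℝ)) (C := 1) (a := 0)
    aestronglyMeasurable_const (by simp)

theorem tilted_inner (hμ : HasExpNormMoments μ) (v : V) :
    HasExpNormMoments (μ.tilted (inner ℝ v)) := fun a ↦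
  (integrable_tilted_iff (hμ.integrable_exp_inner v) _).2 <|
    hμ.integrable_exp_inner_smul v (C := 1) (a := a) (by fun_prop) (by simp)

theorem hasFDerivAt_integral_exp_inner_smul (hμ : HasExpNormMoments μ) (v : V)
    {g : V → F} (hg : AEStronglyMeasurable g μ) (hga : ∀ y, ‖g y‖ ≤ C * Real.exp (a * ‖y‖)) :
    HasFDerivAt (fun w ↦ ∫ y, Real.exp (inner ℝ w y) • g y ∂μ)
      (∫ y, Real.exp (inner ℝ v y) • InnerProductSpace.rankOne ℝ (g y) y ∂μ) v := by
  have hC : 0 ≤ C := nonneg_of_mul_nonneg_left ((norm_nonneg _).trans (hga 0)) (Real.exp_pos _)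
  refine hasFDerivAt_integral_of_dominated_of_fderiv_le (Metric.ball_mem_nhds v one_pos)
    (F' := fun w y ↦ Real.exp (inner ℝ w y) • InnerProductSpace.rankOne ℝ (g y) y)
    (bound := fun y ↦ C * Real.exp ((‖v‖ + 1 + (a + 1)) * ‖y‖))
    (.of_forall fun w ↦ aestronglyMeasurable_exp_inner_smul w hg)
    (hμ.integrable_exp_inner_smul v hg hga)
    (aestronglyMeasurable_exp_inner_smul v
      (aestronglyMeasurable_rankOne hg aestronglyMeasurable_id))
    (.of_forall fun y w hw ↦ ?_) ((hμ _).const_mul C)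
    (.of_forall fun y w _ ↦ hasFDerivAt_exp_inner_smul y w (g y))
  have hwv : ‖w‖ ≤ ‖v‖ + 1 := by
    linarith [norm_sub_norm_le w v, mem_ball_iff_norm.1 hw]
  refine (norm_exp_inner_smul_le w (norm_rankOne_le_mul_exp_norm (hga y))).trans ?_
  gcongr

theorem hasFDerivAt_integral_exp_inner (hμ : HasExpNormMoments μ) (v : V) :
    HasFDerivAt (fun w ↦ ∫ y, Real.exp (inner ℝ w y) ∂μ)
      (∫ y, Real.exp (inner ℝ v y) • innerSL ℝ y ∂μ) v := by
  simpa using hμ.hasFDerivAt_integral_exp_inner_smul v (g := fun _ ↦ (1 : ℝ)) (C := 1) (a := 0)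
    aestronglyMeasurable_const (by simp)

variable [CompleteSpace V] [NeZero μ]

theorem hasGradientAt_log_integral_exp_inner (hμ : HasExpNormMoments μ) (v : V) :
    HasGradientAt (fun w ↦ Real.log (∫ y, Real.exp (inner ℝ w y) ∂μ))
      (∫ y, y ∂(μ.tilted (inner ℝ v))) v := by
  have hpos := integral_exp_pos (hμ.integrable_exp_inner v)
  have hint : ∫ y, Real.exp (inner ℝ v y) • innerSL ℝ y ∂μ
      = innerSL ℝ (∫ y, Real.exp (inner ℝ v y) • y ∂μ) := by
    simp_rw [← map_smul]
    exact (innerSL ℝ).integral_comp_comm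
      (hμ.integrable_exp_inner_smul v aestronglyMeasurable_id norm_le_one_mul_exp_norm)
  rw [hasGradientAt_iff_hasFDerivAt, integral_tilted_inner]
  refine ((hμ.hasFDerivAt_integral_exp_inner v).log hpos.ne').congr_fderiv ?_
  rw [hint, map_smul]
  rfl

theorem hasFDerivAt_integral_id_tilted (hμ : HasExpNormMoments μ) (v : V) :
    HasFDerivAt (fun w ↦ ∫ y, y ∂(μ.tilted (inner ℝ w)))
      (centeredCovarianceOperator (μ.tilted (inner ℝ v))) v := by
  -- Centering at the mean `m` at `v` removes the derivative of the normalising factor.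
  set m := ∫ y, y ∂(μ.tilted (inner ℝ v)) with hm
  have hprob (w : V) : IsProbabilityMeasure (μ.tilted (inner ℝ w)) :=
    isProbabilityMeasure_tilted (hμ.integrable_exp_inner w)
  have hmean (w : V) : ∫ y, y ∂(μ.tilted (inner ℝ w)) =
      (∫ y, Real.exp (inner ℝ w y) ∂μ)⁻¹ • (∫ y, Real.exp (inner ℝ w y) • (y - m) ∂μ) + m := by
    have hid : Integrable (fun y ↦ y) (μ.tilted (inner ℝ w)) :=
      (hμ.tilted_inner w).memLp_two_id.integrable one_le_two
    rw [← integral_tilted_inner, integral_sub hid (integrable_const m), integral_const,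
      probReal_univ, one_smul, sub_add_cancel]
  have hpos := integral_exp_pos (hμ.integrable_exp_inner v)
  have hcentered : ∫ y, Real.exp (inner ℝ v y) • (y - m) ∂μ = 0 := by
    have h := hmean v
    rwa [← hm, right_eq_add, smul_eq_zero_iff_right (inv_ne_zero hpos.ne')] at h
  have hnum := hμ.hasFDerivAt_integral_exp_inner_smul v (g := fun y ↦ y - m) (by fun_prop)
    (norm_sub_le_mul_exp_norm m)
  have hden := (hasDerivAt_inv hpos.ne').comp_hasFDerivAt v (hμ.hasFDerivAt_integral_exp_inner v)
  rw [centeredCovarianceOperator_eq_integral_rankOne_sub (hμ.tilted_inner v).memLp_two_id,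
    integral_tilted_inner, funext hmean]
  refine ((hden.smul hnum).add_const m).congr_fderiv ?_
  simp [hcentered, ← hm]

end HasExpNormMoments

end ExponentialFamily

section Divergence

variable {n : ℕ} {u v : EuclideanSpace ℝ (Fin n) → EuclideanSpace ℝ (Fin n)}
  {x : EuclideanSpace ℝ (Fin n)}

theorem divergence_eq_trace (u : EuclideanSpace ℝ (Fin n) → EuclideanSpace ℝ (Fin n))
    (x : EuclideanSpace ℝ (Fin n)) :
    divergence n u x = (fderiv ℝ u x).trace ℝ (EuclideanSpace ℝ (Fin n)) := by
  rw [LinearMap.trace_eq_sum_inner _ (EuclideanSpace.basisFun (Fin n) ℝ)]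
  simp [divergence, EuclideanSpace.inner_single_left]

theorem divergence_id : divergence n (fun z ↦ z) x = n := by
  simp [divergence_eq_trace]

theorem divergence_sub (hu : DifferentiableAt ℝ u x) (hv : DifferentiableAt ℝ v x) :
    divergence n (fun z ↦ u z - v z) x = divergence n u x - divergence n v x := by
  simp [divergence_eq_trace, fderiv_fun_sub hu hv]

theorem divergence_const_smul (hu : DifferentiableAt ℝ u x) (c : ℝ) :
    divergence n (fun z ↦ c • u z) x = c * divergence n u x := by
  simp [divergence_eq_trace, fderiv_fun_const_smul hu c]

end Divergence

section Posterior

variable {n : ℕ} {J : EuclideanSpace ℝ (Fin n) → EReal} {t ε C : ℝ}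

theorem measurable_heatIntegrand (hJ : Measurable J) (x : EuclideanSpace ℝ (Fin n)) (t ε : ℝ) :
    Measurable (heatIntegrand n J x t ε) := by
  have := hJ.ereal_toReal
  exact .ite (hJ (measurableSet_singleton ⊤)) measurable_const (by fun_prop)

theorem heatIntegrand_nonneg (x y : EuclideanSpace ℝ (Fin n)) : 0 ≤ heatIntegrand n J x t ε y := by
  unfold heatIntegrand
  split_ifs <;> positivity

theorem heatIntegrand_le (hε : 0 < ε) {y : EuclideanSpace ℝ (Fin n)} (hC : (C : EReal) ≤ J y)
    (x : EuclideanSpace ℝ (Fin n)) :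
    heatIntegrand n J x t ε y ≤ Real.exp (-((‖x - y‖ ^ 2 / (2 * t) + C) / ε)) := by
  unfold heatIntegrand
  split_ifs with hy
  · positivity
  · gcongr
    simpa using EReal.toReal_le_toReal hC (EReal.coe_ne_bot C) hy

theorem heatIntegrand_eq_exp_inner_mul (x y : EuclideanSpace ℝ (Fin n)) :
    heatIntegrand n J x t ε y = Real.exp (-(‖x‖ ^ 2 / (2 * t) / ε)) *
      (Real.exp (inner ℝ ((t * ε)⁻¹ • x) y) * heatIntegrand n J 0 t ε y) := by
  unfold heatIntegrand
  split_ifs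
  · simp
  · rw [← Real.exp_add, ← Real.exp_add, real_inner_smul_left, norm_sub_sq_real, zero_sub, norm_neg]
    congr 1
    ring

/-- The Gibbs measure with density `exp(−(‖y‖²/(2t) + J(y))/ε)`: the unnormalised posterior
for the datum `x = 0`. Every other posterior is an exponential tilt of it. -/
noncomputable def gibbsMeasure (J : EuclideanSpace ℝ (Fin n) → EReal) (t ε : ℝ) :
    Measure (EuclideanSpace ℝ (Fin n)) :=
  volume.withDensity fun y ↦ ENNReal.ofReal (heatIntegrand n J 0 t ε y)

theorem integral_gibbsMeasure {F : Type*} [NormedAddCommGroup F] [NormedSpace ℝ F]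
    (hJ : Measurable J) (g : EuclideanSpace ℝ (Fin n) → F) :
    ∫ y, g y ∂(gibbsMeasure J t ε) = ∫ y, heatIntegrand n J 0 t ε y • g y := by
  rw [gibbsMeasure, integral_withDensity_eq_integral_toReal_smul
    (measurable_heatIntegrand hJ 0 t ε).ennreal_ofReal (.of_forall fun _ ↦ ENNReal.ofReal_lt_top)]
  simp_rw [ENNReal.toReal_ofReal (heatIntegrand_nonneg _ _)]

theorem gibbsMeasure_ne_zero (hJ : Measurable J) (hdom : volume {y | J y ≠ ⊤} ≠ 0) :
    gibbsMeasure J t ε ≠ 0 := by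
  contrapose! hdom
  rw [gibbsMeasure, withDensity_eq_zero_iff
    (measurable_heatIntegrand hJ 0 t ε).ennreal_ofReal.aemeasurable] at hdom
  refine measure_mono_null (fun y (hy : J y ≠ ⊤) ↦ ?_) hdom
  simp [heatIntegrand, hy, Real.exp_pos]

theorem hasExpNormMoments_gibbsMeasure (hJ : Measurable J) (hC : ∀ y, (C : EReal) ≤ J y)
    (ht : 0 < t) (hε : 0 < ε) : HasExpNormMoments (gibbsMeasure J t ε) := by
  intro a
  rw [gibbsMeasure, integrable_withDensity_iff_integrable_smul'
    (measurable_heatIntegrand hJ 0 t ε).ennreal_ofReal (.of_forall fun _ ↦ ENNReal.ofReal_lt_top)]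
  have hb : 0 < (2 * t * ε)⁻¹ := by positivity
  have hmeas := measurable_heatIntegrand hJ 0 t ε
  refine ((integrable_exp_mul_norm_sub_mul_norm_sq hb a).const_mul (Real.exp (-(C / ε)))).mono'
    (by fun_prop) (.of_forall fun y ↦ ?_)
  rw [ENNReal.toReal_ofReal (heatIntegrand_nonneg _ _), smul_eq_mul, Real.norm_of_nonneg
    (mul_nonneg (heatIntegrand_nonneg _ _) (Real.exp_nonneg _))]
  calc heatIntegrand n J 0 t ε y * Real.exp (a * ‖y‖)
      ≤ Real.exp (-((‖0 - y‖ ^ 2 / (2 * t) + C) / ε)) * Real.exp (a * ‖y‖) := by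
        gcongr
        exact heatIntegrand_le hε (hC y) 0
    _ = Real.exp (-(C / ε)) * Real.exp (a * ‖y‖ - (2 * t * ε)⁻¹ * ‖y‖ ^ 2) := by
        rw [← Real.exp_add, ← Real.exp_add, zero_sub, norm_neg]
        congr 1
        field_simp
        ring

theorem integral_heatIntegrand_smul {F : Type*} [NormedAddCommGroup F] [NormedSpace ℝ F]
    (hJ : Measurable J) (x : EuclideanSpace ℝ (Fin n)) (g : EuclideanSpace ℝ (Fin n) → F) :
    ∫ y, heatIntegrand n J x t ε y • g y = Real.exp (-(‖x‖ ^ 2 / (2 * t) / ε)) •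
      ∫ y, Real.exp (inner ℝ ((t * ε)⁻¹ • x) y) • g y ∂(gibbsMeasure J t ε) := by
  rw [integral_gibbsMeasure hJ, ← integral_smul]
  refine integral_congr_ae (.of_forall fun y ↦ ?_)
  simp only [heatIntegrand_eq_exp_inner_mul x y, mul_smul]
  rw [smul_comm (Real.exp (inner ℝ ((t * ε)⁻¹ • x) y))]

theorem partitionFn_eq (hJ : Measurable J) (x : EuclideanSpace ℝ (Fin n)) :
    partitionFn n J x t ε = Real.exp (-(‖x‖ ^ 2 / (2 * t) / ε)) *
      ∫ y, Real.exp (inner ℝ ((t * ε)⁻¹ • x) y) ∂(gibbsMeasure J t ε) := by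
  simpa [partitionFn] using integral_heatIntegrand_smul (F := ℝ) hJ x (fun _ ↦ 1)

/-- The posterior distribution of `y` given the datum `x`, as a probability measure: `E_J[f]`
is `∫ f` against it. -/
noncomputable def posterior (J : EuclideanSpace ℝ (Fin n) → EReal) (x : EuclideanSpace ℝ (Fin n))
    (t ε : ℝ) : Measure (EuclideanSpace ℝ (Fin n)) :=
  (gibbsMeasure J t ε).tilted (inner ℝ ((t * ε)⁻¹ • x))

theorem integral_posterior {F : Type*} [NormedAddCommGroup F] [NormedSpace ℝ F]
    (hJ : Measurable J) (x : EuclideanSpace ℝ (Fin n)) (g : EuclideanSpace ℝ (Fin n) → F) :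
    ∫ y, g y ∂(posterior J x t ε) =
      (partitionFn n J x t ε)⁻¹ • ∫ y, heatIntegrand n J x t ε y • g y := by
  rw [posterior, integral_tilted_inner, integral_heatIntegrand_smul hJ, partitionFn_eq hJ,
    smul_smul, mul_inv_rev (Real.exp _), inv_mul_cancel_right₀ (Real.exp_pos _).ne']

theorem postMean_eq_integral_posterior (hJ : Measurable J) (x : EuclideanSpace ℝ (Fin n)) :
    postMean n J x t ε = ∫ y, y ∂(posterior J x t ε) :=
  (integral_posterior hJ x _).symm

section BoundedBelow

variable (hJ : Measurable J) (hC : ∀ y, (C : EReal) ≤ J y) (hdom : volume {y | J y ≠ ⊤} ≠ 0)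
  (ht : 0 < t) (hε : 0 < ε)

include hJ hC hdom ht hε

theorem hasFDerivAt_postMean (x : EuclideanSpace ℝ (Fin n)) :
    HasFDerivAt (fun z ↦ postMean n J z t ε)
      ((t * ε)⁻¹ • centeredCovarianceOperator (posterior J x t ε)) x := by
  have : NeZero (gibbsMeasure J t ε) := ⟨gibbsMeasure_ne_zero hJ hdom⟩
  have h := ((hasExpNormMoments_gibbsMeasure hJ hC ht hε).hasFDerivAt_integral_id_tilted
    ((t * ε)⁻¹ • x)).comp x ((hasFDerivAt_id x).const_smul (t * ε)⁻¹)
  rw [ContinuousLinearMap.comp_smul, ContinuousLinearMap.comp_id] at h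
  exact h.congr_of_eventuallyEq (.of_forall fun z ↦ postMean_eq_integral_posterior hJ z)

theorem viscSol_eq (x : EuclideanSpace ℝ (Fin n)) :
    viscSol n J x t ε = -ε * Real.log ((2 * Real.pi * t * ε) ^ (-(n : ℝ) / 2)) +
      (‖x‖ ^ 2 / (2 * t) - ε *
        Real.log (∫ y, Real.exp (inner ℝ ((t * ε)⁻¹ • x) y) ∂(gibbsMeasure J t ε))) := by
  have : NeZero (gibbsMeasure J t ε) := ⟨gibbsMeasure_ne_zero hJ hdom⟩
  have hpos := integral_exp_pos
    ((hasExpNormMoments_gibbsMeasure hJ hC ht hε).integrable_exp_inner ((t * ε)⁻¹ • x))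
  rw [viscSol, partitionFn_eq hJ, Real.log_mul (by positivity) (by positivity),
    Real.log_mul (Real.exp_pos _).ne' hpos.ne', Real.log_exp]
  field_simp
  ring

theorem hasGradientAt_viscSol (x : EuclideanSpace ℝ (Fin n)) :
    HasGradientAt (fun z ↦ viscSol n J z t ε) (t⁻¹ • (x - postMean n J x t ε)) x := by
  have : NeZero (gibbsMeasure J t ε) := ⟨gibbsMeasure_ne_zero hJ hdom⟩
  have hlog := ((hasExpNormMoments_gibbsMeasure hJ hC ht hε).hasGradientAt_log_integral_exp_inner
    ((t * ε)⁻¹ • x)).hasFDerivAt.comp x ((hasFDerivAt_id x).const_smul (t * ε)⁻¹)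
  have hsq := (hasStrictFDerivAt_norm_sq x).hasFDerivAt.mul_const (2 * t)⁻¹
  rw [hasGradientAt_iff_hasFDerivAt, funext (viscSol_eq hJ hC hdom ht hε),
    postMean_eq_integral_posterior hJ]
  refine ((hsq.sub (hlog.const_mul ε)).const_add _).congr_fderiv ?_
  ext w
  simp only [posterior, mul_inv_rev, ContinuousLinearMap.comp_smul, ContinuousLinearMap.comp_id,
    sub_apply, smul_apply, coe_innerSL_apply, nsmul_eq_mul, Nat.cast_ofNat, smul_eq_mul,
    InnerProductSpace.toDual_apply_apply, map_smul, map_sub]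
  field_simp

theorem gradient_viscSol :
    gradient (fun z ↦ viscSol n J z t ε) = fun z ↦ t⁻¹ • (z - postMean n J z t ε) :=
  funext fun z ↦ (hasGradientAt_viscSol hJ hC hdom ht hε z).gradient

theorem integral_norm_sub_postMean_sq_posterior (x : EuclideanSpace ℝ (Fin n)) :
    ∫ y, ‖y - postMean n J x t ε‖ ^ 2 ∂(posterior J x t ε) =
      t * ε * divergence n (fun z ↦ postMean n J z t ε) x := by
  have : NeZero (gibbsMeasure J t ε) := ⟨gibbsMeasure_ne_zero hJ hdom⟩
  have hμ := hasExpNormMoments_gibbsMeasure hJ hC ht hε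
  have : IsProbabilityMeasure (posterior J x t ε) :=
    isProbabilityMeasure_tilted (hμ.integrable_exp_inner _)
  have hν : MemLp id 2 (posterior J x t ε) := (hμ.tilted_inner _).memLp_two_id
  rw [divergence_eq_trace, (hasFDerivAt_postMean hJ hC hdom ht hε x).fderiv,
    postMean_eq_integral_posterior hJ, ← trace_centeredCovarianceOperator hν,
    ContinuousLinearMap.toLinearMap_smul, map_smul, smul_eq_mul,
    mul_inv_cancel_left₀ (mul_pos ht hε).ne']

theorem divergence_gradient_viscSol (x : EuclideanSpace ℝ (Fin n)) :
    divergence n (gradient fun z ↦ viscSol n J z t ε) x =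
      t⁻¹ * (n - divergence n (fun z ↦ postMean n J z t ε) x) := by
  have hmean := (hasFDerivAt_postMean hJ hC hdom ht hε x).differentiableAt
  rw [gradient_viscSol hJ hC hdom ht hε,
    divergence_const_smul (differentiableAt_fun_id.fun_sub hmean),
    divergence_sub differentiableAt_fun_id hmean, divergence_id]

end BoundedBelow

end Posterior

theorem postVariance_eq_divergence_general {n : ℕ} {J : EuclideanSpace ℝ (Fin n) → EReal} {C : ℝ}
    (hJ : Measurable J) (hC : ∀ y, (C : EReal) ≤ J y) (hdom : volume {y | J y ≠ ⊤} ≠ 0)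
    {t ε : ℝ} (ht : 0 < t) (hε : 0 < ε) (x : EuclideanSpace ℝ (Fin n)) :
    Differentiable ℝ (fun z ↦ postMean n J z t ε) ∧
    Differentiable ℝ (gradient fun z ↦ viscSol n J z t ε) ∧
    (partitionFn n J x t ε)⁻¹
        * ∫ y, heatIntegrand n J x t ε y * ‖y - postMean n J x t ε‖ ^ 2
      = t * ε * divergence n (fun z ↦ postMean n J z t ε) x ∧
    (partitionFn n J x t ε)⁻¹
        * ∫ y, heatIntegrand n J x t ε y * ‖y - postMean n J x t ε‖ ^ 2
      = n * t * ε - t ^ 2 * ε * divergence n (gradient fun z ↦ viscSol n J z t ε) x := by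
  have hmean : Differentiable ℝ (fun z ↦ postMean n J z t ε) := fun z ↦
    (hasFDerivAt_postMean hJ hC hdom ht hε z).differentiableAt
  have hgrad : Differentiable ℝ (gradient fun z ↦ viscSol n J z t ε) := by
    rw [gradient_viscSol hJ hC hdom ht hε]
    fun_prop
  have hvar : (partitionFn n J x t ε)⁻¹
      * ∫ y, heatIntegrand n J x t ε y * ‖y - postMean n J x t ε‖ ^ 2
      = t * ε * divergence n (fun z ↦ postMean n J z t ε) x := by
    rw [← integral_norm_sub_postMean_sq_posterior hJ hC hdom ht hε x, integral_posterior hJ]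
    rfl
  refine ⟨hmean, hgrad, hvar, ?_⟩
  rw [hvar, divergence_gradient_viscSol hJ hC hdom ht hε]
  field_simp
  ring

/-- For every `x`, `t > 0`, `ε > 0`, the posterior mean squared error satisfies
`E_J[‖y − u_PM(x,t,ε)‖²] = tε ∇ₓ·u_PM(x,t,ε) = ntε − t²ε ΔₓS_ε(x,t)`, where the maps
`x ↦ u_PM(x,t,ε)` and `x ↦ ∇ₓS_ε(x,t)` are differentiable and the Laplacian is the
divergence of the gradient. -/
theorem postVariance_eq_divergence (n : ℕ) (hn : 1 ≤ n)
    (J : EuclideanSpace ℝ (Fin n) → EReal)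
    (hJ_proper_bot : ∀ y, J y ≠ ⊥)
    (hJ_lsc : LowerSemicontinuous J)
    (hJ_convex : ∀ y₁ y₂ : EuclideanSpace ℝ (Fin n), ∀ a b : ℝ, 0 ≤ a → 0 ≤ b → a + b = 1 →
      J (a • y₁ + b • y₂) ≤ (a : EReal) * J y₁ + (b : EReal) * J y₂)
    (hJ_int : (interior {y : EuclideanSpace ℝ (Fin n) | J y ≠ ⊤}).Nonempty)
    (hJ_inf : (⨅ y : EuclideanSpace ℝ (Fin n), J y) = (0 : EReal))
    (x : EuclideanSpace ℝ (Fin n)) (t ε : ℝ) (ht : 0 < t) (hε : 0 < ε) :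
    Differentiable ℝ (fun z : EuclideanSpace ℝ (Fin n) => postMean n J z t ε) ∧
    Differentiable ℝ (fun z : EuclideanSpace ℝ (Fin n) =>
      gradient (fun z' : EuclideanSpace ℝ (Fin n) => viscSol n J z' t ε) z) ∧
    (partitionFn n J x t ε)⁻¹
        * ∫ y, heatIntegrand n J x t ε y * ‖y - postMean n J x t ε‖ ^ 2
      = t * ε * divergence n (fun z : EuclideanSpace ℝ (Fin n) => postMean n J z t ε) x ∧
    (partitionFn n J x t ε)⁻¹
        * ∫ y, heatIntegrand n J x t ε y * ‖y - postMean n J x t ε‖ ^ 2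
      = n * t * ε - t ^ 2 * ε * divergence n
          (fun z : EuclideanSpace ℝ (Fin n) =>
            gradient (fun z' : EuclideanSpace ℝ (Fin n) => viscSol n J z' t ε) z) x := by
  have hdom : volume {y | J y ≠ ⊤} ≠ 0 :=
    ((isOpen_interior.measure_pos volume hJ_int).trans_le (measure_mono interior_subset)).ne'
  exact postVariance_eq_divergence_general hJ_lsc.measurable (C := 0)
    (fun y ↦ hJ_inf.ge.trans (iInf_le J y)) hdom ht hε x
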